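/- (Theorem 1, uniqueness of the root.) Consider an exchange economy with N consumers with utility functions u_i that are in addition differentiable on the strictly positive orthant, and total endowment w ∈ ℝ^K, w_k > 0 for all k. Fix α ∈ ℝ^N with α_i > 0 for all i, and suppose that for every strictly positive price vector q the supremum defining v̄_i(q) is attained at a unique strictly positive point. If (x,p) and (x',p') both satisfy: x, x' feasible (components nonnegative, sums at most w), p and p' strictly positive, and Y_α(x,p,w) = 0 = Y_α(x',p',w), then x = x' and p = p'. (For any welfare weights the potential has at most one root, the Walrasian equilibrium.) -/

import Mathlib

noncomputable section

/-- Inner product on `ℝ^K`. -/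
def dot {K : ℕ} (p x : Fin K → ℝ) : ℝ := ∑ k, p k * x k

/-- A utility function: continuous, strictly increasing and strictly concave
on the nonnegative orthant. -/
structure IsUtility {K : ℕ} (u : (Fin K → ℝ) → ℝ) : Prop where
  continuousOn : ContinuousOn u {x : Fin K → ℝ | ∀ k, 0 ≤ x k}
  strictMono : ∀ x y : Fin K → ℝ, (∀ k, 0 ≤ x k) → (∀ k, 0 ≤ y k) →
    (∀ k, x k ≤ y k) → x ≠ y → u x < u y
  strictConcaveOn : StrictConcaveOn ℝ {x : Fin K → ℝ | ∀ k, 0 ≤ x k} u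

/-- The Fenchel dual `v̄(q) = sup { u(x) − ⟨q,x⟩ : x ≥ 0 }`. -/
def fenchelDual {K : ℕ} (u : (Fin K → ℝ) → ℝ) (q : Fin K → ℝ) : ℝ :=
  sSup ((fun x => u x - dot q x) '' {x : Fin K → ℝ | ∀ k, 0 ≤ x k})

/-- The economy's potential
`Y_α(x,p,w) = Σ_i α_i·u_i(x_i) − ⟨p,w⟩ − Σ_i α_i·v̄_i(p/α_i)`. -/
def potential {N K : ℕ} (u : Fin N → (Fin K → ℝ) → ℝ) (α : Fin N → ℝ)
    (x : Fin N → Fin K → ℝ) (p w : Fin K → ℝ) : ℝ :=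
  ∑ i, α i * u i (x i) - dot p w -
    ∑ i, α i * fenchelDual (u i) (fun k => p k / α i)

/-!
With the Fenchel–Young gap `v̄(q) - (u(x) - ⟨q,x⟩) ≥ 0`, the potential becomes
`Y_α(x,p,w) = -(⟨p, w - Σ_i x_i⟩ + Σ_i α_i · gap_i(p/α_i, x_i))`. It is therefore nonpositive on
feasible allocations, and at a root every `x_i` attains the supremum defining `v̄_i(p/α_i)`.
The potential is a function of `x` plus a function of `p`, so
`Y(x,p) + Y(x',p') = Y(x',p) + Y(x,p')`: if the left side vanishes, so do both nonpositive terms on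
the right. Hence `x_i` and `x'_i` are maximisers at the same price and coincide. Finally `p/α_i` and
`p'/α_i` are both the gradient of `u_i` at `x_i`.
-/

section Demand

variable {K : ℕ} {u : (Fin K → ℝ) → ℝ} {q q' x z : Fin K → ℝ}

lemma dot_eq_dotProduct (p x : Fin K → ℝ) : dot p x = p ⬝ᵥ x := rfl

lemma mul_dot_div {a : ℝ} (ha : a ≠ 0) (p x : Fin K → ℝ) :
    a * dot (fun k => p k / a) x = dot p x := by
  simp only [dot, Finset.mul_sum, ← mul_assoc, mul_div_cancel₀ _ ha]

/-- The quasilinear payoffs `u(x) - ⟨q,x⟩`, `x ≥ 0`, whose supremum is `fenchelDual u q`. -/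
def payoffs (u : (Fin K → ℝ) → ℝ) (q : Fin K → ℝ) : Set ℝ :=
  (fun x => u x - dot q x) '' {x : Fin K → ℝ | ∀ k, 0 ≤ x k}

/-- The bundle `z ≥ 0` is demanded at the price `q`: it attains the supremum defining
`fenchelDual u q`. -/
structure IsDemand (u : (Fin K → ℝ) → ℝ) (q z : Fin K → ℝ) : Prop where
  nonneg : ∀ k, 0 ≤ z k
  isMaxOn : IsMaxOn (fun x => u x - dot q x) {x : Fin K → ℝ | ∀ k, 0 ≤ x k} z

/-- The Fenchel–Young gap `v̄(q) - (u(x) - ⟨q,x⟩)`: the payoff lost at the price `q` by consuming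
`x` instead of a demanded bundle. -/
def fenchelGap (u : (Fin K → ℝ) → ℝ) (q x : Fin K → ℝ) : ℝ :=
  fenchelDual u q - (u x - dot q x)

lemma IsDemand.bddAbove (hz : IsDemand u q z) : BddAbove (payoffs u q) :=
  ⟨u z - dot q z, Set.forall_mem_image.2 fun _ hy => hz.isMaxOn hy⟩

lemma sub_dot_le_fenchelDual (hbdd : BddAbove (payoffs u q)) (hx : ∀ k, 0 ≤ x k) :
    u x - dot q x ≤ fenchelDual u q :=
  le_csSup hbdd ⟨x, hx, rfl⟩

lemma fenchelGap_nonneg (hbdd : BddAbove (payoffs u q)) (hx : ∀ k, 0 ≤ x k) :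
    0 ≤ fenchelGap u q x :=
  sub_nonneg.2 (sub_dot_le_fenchelDual hbdd hx)

lemma isDemand_of_fenchelGap_eq_zero (hbdd : BddAbove (payoffs u q)) (hx : ∀ k, 0 ≤ x k)
    (hgap : fenchelGap u q x = 0) : IsDemand u q x where
  nonneg := hx
  isMaxOn _ hy := (sub_dot_le_fenchelDual hbdd hy).trans_eq (sub_eq_zero.1 hgap)

lemma IsDemand.isLocalMax (hz : IsDemand u q z) (hpos : ∀ k, 0 < z k) :
    IsLocalMax (fun x => u x - dot q x) z := by
  refine hz.isMaxOn.isLocalMax ?_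
  filter_upwards [set_pi_mem_nhds Set.finite_univ fun k _ => Ioi_mem_nhds (hpos k)] with y hy k
  exact (hy k (Set.mem_univ k)).le

lemma IsDemand.fderiv_apply (hz : IsDemand u q z) (hpos : ∀ k, 0 < z k)
    (hdiff : DifferentiableAt ℝ u z) (v : Fin K → ℝ) : fderiv ℝ u z v = dot q v := by
  let dotCLM : (Fin K → ℝ) →L[ℝ] ℝ := (dotProductBilin ℝ ℝ q).toContinuousLinearMap
  have hzero : fderiv ℝ u z - dotCLM = 0 :=
    (hz.isLocalMax hpos).hasFDerivAt_eq_zero (hdiff.hasFDerivAt.sub dotCLM.hasFDerivAt)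
  exact DFunLike.congr_fun (sub_eq_zero.1 hzero) v

lemma IsDemand.price_unique (hz : IsDemand u q z) (hz' : IsDemand u q' z)
    (hpos : ∀ k, 0 < z k) (hdiff : DifferentiableAt ℝ u z) : q = q' :=
  dotProduct_eq q q' fun v =>
    (hz.fderiv_apply hpos hdiff v).symm.trans (hz'.fderiv_apply hpos hdiff v)

/-- The supremum defining `fenchelDual u q` is attained at exactly one bundle, and that bundle is
strictly positive. -/
def HasUniqueInteriorDemand (u : (Fin K → ℝ) → ℝ) (q : Fin K → ℝ) : Prop :=
  ∃ z : Fin K → ℝ, (∀ k, 0 < z k) ∧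
    (∀ y : Fin K → ℝ, (∀ k, 0 ≤ y k) → u y - dot q y ≤ u z - dot q z) ∧
    (∀ z' : Fin K → ℝ, (∀ k, 0 ≤ z' k) →
      (∀ y : Fin K → ℝ, (∀ k, 0 ≤ y k) → u y - dot q y ≤ u z' - dot q z') → z' = z)

lemma HasUniqueInteriorDemand.existsUnique (h : HasUniqueInteriorDemand u q) :
    ∃! z, IsDemand u q z := by
  obtain ⟨z, hpos, hmax, hunique⟩ := h
  exact ⟨z, ⟨fun k => (hpos k).le, hmax⟩, fun z' hz' => hunique z' hz'.nonneg hz'.isMaxOn⟩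

lemma HasUniqueInteriorDemand.pos (h : HasUniqueInteriorDemand u q) (hz : IsDemand u q z) :
    ∀ k, 0 < z k := by
  obtain ⟨z₀, hpos, -, hunique⟩ := h
  rwa [hunique z hz.nonneg hz.isMaxOn]

end Demand

section Potential

variable {N K : ℕ} {u : Fin N → (Fin K → ℝ) → ℝ} {α : Fin N → ℝ}
  {x x' : Fin N → Fin K → ℝ} {p p' w : Fin K → ℝ}

lemma potential_eq_neg_slack_add_gaps (hα : ∀ i, α i ≠ 0) :
    potential u α x p w =
      -(dot p (w - ∑ i, x i) + ∑ i, α i * fenchelGap (u i) (fun k => p k / α i) (x i)) := by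
  simp only [potential, fenchelGap, mul_sub, mul_dot_div (hα _), Finset.sum_sub_distrib]
  simp only [dot_eq_dotProduct, dotProduct_sub, dotProduct_sum]
  ring

lemma dot_slack_nonneg (hp : ∀ k, 0 ≤ p k) (hfeas : ∀ k, ∑ i, x i k ≤ w k) :
    0 ≤ dot p (w - ∑ i, x i) :=
  dotProduct_nonneg_of_nonneg hp fun k => by
    simpa only [Pi.zero_apply, Pi.sub_apply, Finset.sum_apply, sub_nonneg] using hfeas k

lemma potential_nonpos (hα : ∀ i, 0 < α i)
    (hbdd : ∀ i, BddAbove (payoffs (u i) fun k => p k / α i)) (hx : ∀ i k, 0 ≤ x i k)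
    (hfeas : ∀ k, ∑ i, x i k ≤ w k) (hp : ∀ k, 0 ≤ p k) : potential u α x p w ≤ 0 := by
  rw [potential_eq_neg_slack_add_gaps fun i => (hα i).ne', neg_nonpos]
  exact add_nonneg (dot_slack_nonneg hp hfeas) <| Finset.sum_nonneg fun i _ =>
    mul_nonneg (hα i).le (fenchelGap_nonneg (hbdd i) (hx i))

lemma isDemand_of_potential_eq_zero (hα : ∀ i, 0 < α i)
    (hbdd : ∀ i, BddAbove (payoffs (u i) fun k => p k / α i)) (hx : ∀ i k, 0 ≤ x i k)
    (hfeas : ∀ k, ∑ i, x i k ≤ w k) (hp : ∀ k, 0 ≤ p k) (hY : potential u α x p w = 0)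
    (i : Fin N) : IsDemand (u i) (fun k => p k / α i) (x i) := by
  have gap_nonneg : ∀ j ∈ Finset.univ, 0 ≤ α j * fenchelGap (u j) (fun k => p k / α j) (x j) :=
    fun j _ => mul_nonneg (hα j).le (fenchelGap_nonneg (hbdd j) (hx j))
  rw [potential_eq_neg_slack_add_gaps fun j => (hα j).ne', neg_eq_zero,
    add_eq_zero_iff_of_nonneg (dot_slack_nonneg hp hfeas) (Finset.sum_nonneg gap_nonneg),
    Finset.sum_eq_zero_iff_of_nonneg gap_nonneg] at hY
  have gap_eq_zero := (mul_eq_zero_iff_left (hα i).ne').1 (hY.2 i (Finset.mem_univ i))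
  exact isDemand_of_fenchelGap_eq_zero (hbdd i) (hx i) gap_eq_zero

lemma potential_add_potential_swap :
    potential u α x p w + potential u α x' p' w =
      potential u α x' p w + potential u α x p' w := by
  simp only [potential]
  ring

lemma potential_swap_eq_zero (hα : ∀ i, 0 < α i)
    (hbdd : ∀ i, BddAbove (payoffs (u i) fun k => p k / α i))
    (hbdd' : ∀ i, BddAbove (payoffs (u i) fun k => p' k / α i))
    (hx : ∀ i k, 0 ≤ x i k) (hx' : ∀ i k, 0 ≤ x' i k)
    (hfeas : ∀ k, ∑ i, x i k ≤ w k) (hfeas' : ∀ k, ∑ i, x' i k ≤ w k)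
    (hp : ∀ k, 0 ≤ p k) (hp' : ∀ k, 0 ≤ p' k)
    (hY : potential u α x p w = 0) (hY' : potential u α x' p' w = 0) :
    potential u α x' p w = 0 := by
  have nonpos := potential_nonpos hα hbdd hx' hfeas' hp
  have nonpos' := potential_nonpos hα hbdd' hx hfeas hp'
  have swap : potential u α x p w + potential u α x' p' w = _ := potential_add_potential_swap
  linarith

lemma potential_neg_of_isEmpty [IsEmpty (Fin N)] [Nonempty (Fin K)]
    (hp : ∀ k, 0 < p k) (hw : ∀ k, 0 < w k) : potential u α x p w < 0 := by
  have dot_pos : 0 < dot p w :=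
    Finset.sum_pos (fun k _ => mul_pos (hp k) (hw k)) Finset.univ_nonempty
  simpa only [potential, Finset.univ_eq_empty, Finset.sum_empty, zero_sub, sub_zero,
    neg_lt_zero] using dot_pos

end Potential

theorem potential_root_unique_general {N K : ℕ}
    (u : Fin N → (Fin K → ℝ) → ℝ)
    (w : Fin K → ℝ) (hw : ∀ k, 0 < w k)
    (α : Fin N → ℝ) (hα : ∀ i, 0 < α i)
    (hdemand : ∀ i, ∀ q : Fin K → ℝ, (∀ k, 0 < q k) → ∃! z, IsDemand (u i) q z)
    (hsmooth : 0 < N → ∃ i, ∀ q z : Fin K → ℝ, (∀ k, 0 < q k) → IsDemand (u i) q z →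
      (∀ k, 0 < z k) ∧ DifferentiableAt ℝ (u i) z)
    (x x' : Fin N → Fin K → ℝ) (p p' : Fin K → ℝ)
    (hx : ∀ i k, 0 ≤ x i k) (hx' : ∀ i k, 0 ≤ x' i k)
    (hfeas : ∀ k, ∑ i, x i k ≤ w k) (hfeas' : ∀ k, ∑ i, x' i k ≤ w k)
    (hp : ∀ k, 0 < p k) (hp' : ∀ k, 0 < p' k)
    (hY : potential u α x p w = 0) (hY' : potential u α x' p' w = 0) :
    x = x' ∧ p = p' := by
  have hq (i) : ∀ k, 0 < p k / α i := fun k => div_pos (hp k) (hα i)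
  have hq' (i) : ∀ k, 0 < p' k / α i := fun k => div_pos (hp' k) (hα i)
  have hbdd (i) := (hdemand i _ (hq i)).exists.choose_spec.bddAbove
  have hbdd' (i) := (hdemand i _ (hq' i)).exists.choose_spec.bddAbove
  have hp₀ (k) := (hp k).le
  have hp₀' (k) := (hp' k).le
  have hYswap : potential u α x' p w = 0 :=
    potential_swap_eq_zero hα hbdd hbdd' hx hx' hfeas hfeas' hp₀ hp₀' hY hY'
  have demand := isDemand_of_potential_eq_zero hα hbdd hx hfeas hp₀ hY
  have demand_swap := isDemand_of_potential_eq_zero hα hbdd hx' hfeas' hp₀ hYswap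
  have demand' := isDemand_of_potential_eq_zero hα hbdd' hx' hfeas' hp₀' hY'
  refine ⟨funext fun i => (hdemand i _ (hq i)).unique (demand i) (demand_swap i), ?_⟩
  obtain rfl | hN := N.eq_zero_or_pos
  · obtain hK | hK := isEmpty_or_nonempty (Fin K)
    · exact Subsingleton.elim p p'
    · exact absurd hY (potential_neg_of_isEmpty hp hw).ne
  · obtain ⟨i, hsmooth_i⟩ := hsmooth hN
    obtain ⟨hpos, hdiff⟩ := hsmooth_i _ _ (hq' i) (demand' i)
    have scaled_prices_eq := (demand_swap i).price_unique (demand' i) hpos hdiff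
    exact funext fun k => (div_left_inj' (hα i).ne').1 (congrFun scaled_prices_eq k)

/-- Theorem 1, uniqueness: for any welfare weights the potential has at most
one root, the Walrasian equilibrium. -/
theorem potential_root_unique {N K : ℕ}
    (u : Fin N → (Fin K → ℝ) → ℝ) (hu : ∀ i, IsUtility (u i))
    (hdiff : ∀ i, ∀ x : Fin K → ℝ, (∀ k, 0 < x k) → DifferentiableAt ℝ (u i) x)
    (w : Fin K → ℝ) (hw : ∀ k, 0 < w k)
    (α : Fin N → ℝ) (hα : ∀ i, 0 < α i)
    (hattain : ∀ i, ∀ q : Fin K → ℝ, (∀ k, 0 < q k) →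
      ∃ z : Fin K → ℝ, (∀ k, 0 < z k) ∧
        (∀ y : Fin K → ℝ, (∀ k, 0 ≤ y k) → u i y - dot q y ≤ u i z - dot q z) ∧
        (∀ z' : Fin K → ℝ, (∀ k, 0 ≤ z' k) →
          (∀ y : Fin K → ℝ, (∀ k, 0 ≤ y k) → u i y - dot q y ≤ u i z' - dot q z') →
          z' = z))
    (x x' : Fin N → Fin K → ℝ) (p p' : Fin K → ℝ)
    (hx : ∀ i k, 0 ≤ x i k) (hx' : ∀ i k, 0 ≤ x' i k)
    (hfeas : ∀ k, ∑ i, x i k ≤ w k) (hfeas' : ∀ k, ∑ i, x' i k ≤ w k)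
    (hp : ∀ k, 0 < p k) (hp' : ∀ k, 0 < p' k)
    (hY : potential u α x p w = 0) (hY' : potential u α x' p' w = 0) :
    x = x' ∧ p = p' := by
  have hdemand (i q hq) : HasUniqueInteriorDemand (u i) q := hattain i q hq
  have hpos (i q z hq) (hz : IsDemand (u i) q z) := (hdemand i q hq).pos hz
  exact potential_root_unique_general u w hw α hα (fun i q hq => (hdemand i q hq).existsUnique)
    (fun hN => ⟨⟨0, hN⟩, fun q z hq hz => ⟨hpos _ q z hq hz, hdiff _ z (hpos _ q z hq hz)⟩⟩)
    x x' p p' hx hx' hfeas hfeas' hp hp' hY hY'
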